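/- Let P = Σ_{j=1}^{M} |L_j⟩⟨L_j| be the projector of an M-dimensional permutation-invariant n-qubit quantum code whose orthonormal codewords |L_j⟩ = Σ_{w=0}^{n} a_{j,w}|D^n_w⟩ have nonnegative real coefficients a_{j,w} in the Dicke basis. Let x be an even integer with 0 ≤ x ≤ n and let β_{n,x} = min_{x/2 ≤ w ≤ n−x/2} C(w,x/2)·C(n−w,x/2)/C(n,x). Then tr((X^{⊗x} ⊗ I^{⊗(n−x)}) P) ≥ β_{n,x}·(M − x). -/

import Mathlib

/-!
Since all Dicke coefficients are nonnegative, so are all matrix elements occurring in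
`tr (X^{⊗x} P) = ∑_j ⟨L_j| X^{⊗x} ⊗ I |L_j⟩`, and dropping the off-diagonal ones gives the lower
bound `∑_j ∑_w a_{j,w}² ⟨D_w| X^{⊗x} ⊗ I |D_w⟩`. Write `x = 2h`. Basis vectors are subsets `S` of the
qubits, and `X^{⊗x} ⊗ I` is `S ↦ S ∆ A` with `A` the first `x` qubits. A subset of size `w` is sent
to one of size `w` as soon as `|S ∩ A| = h`, so for `h ≤ w ≤ n - h` the diagonal element is at least
`C(x,h) C(n-x,w-h) / C(n,w) = C(w,h) C(n-w,h) / C(n,x) ≥ β` (`dicke_ratio`).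

It remains to bound `∑_w s_w` over `h ≤ w ≤ n - h`, where `s_w = ∑_j a_{j,w}²`. Over all `w` this sum
is `M`, each `s_w` is at most `1` (`sum_sq_le_one`), and exactly `x` values of `w` are left out, so
it is at least `M - x`.
-/

open Matrix BigOperators

/-- The single-qubit Pauli matrices `I, X, Y, Z`, indexed by `Fin 4`. -/
noncomputable def pauli1 (k : Fin 4) : Matrix (Fin 2) (Fin 2) ℂ :=
  if k = 0 then 1
  else if k = 1 then !![0, 1; 1, 0]
  else if k = 2 then !![0, -Complex.I; Complex.I, 0]
  else !![1, 0; 0, -1]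

/-- The `n`-qubit Pauli operator labelled by `p : Fin n → Fin 4`, i.e. the tensor product
`pauli1 (p 0) ⊗ ⋯ ⊗ pauli1 (p (n-1))`, acting on `(ℂ²)^{⊗n} ≅ ℂ^{2^n}` (whose standard
basis is indexed by `Fin n → Fin 2`).  The map `p ↦ PauliOp n p` enumerates `G_n`. -/
noncomputable def PauliOp (n : ℕ) (p : Fin n → Fin 4) :
    Matrix (Fin n → Fin 2) (Fin n → Fin 2) ℂ :=
  fun v w => ∏ i, pauli1 (p i) (v i) (w i)

/-- The weight of a Pauli label: the number of non-identity tensor factors. -/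
def pwt {n : ℕ} (p : Fin n → Fin 4) : ℕ :=
  (Finset.univ.filter fun i => p i ≠ 0).card

/-- The Pauli label of `σ_{x,y,z,n} = X^{⊗x} ⊗ Y^{⊗y} ⊗ Z^{⊗z} ⊗ I^{⊗(n-x-y-z)}`. -/
def sigmaLabel (n x y z : ℕ) : Fin n → Fin 4 :=
  fun i => if (i : ℕ) < x then 1
    else if (i : ℕ) < x + y then 2
    else if (i : ℕ) < x + y + z then 3
    else 0

/-- The Dicke state `|D^n_w⟩ = C(n,w)^{-1/2} Σ_{wt(x)=w} |x⟩`, as a vector on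
`(ℂ²)^{⊗n}`. -/
noncomputable def dicke (n w : ℕ) : (Fin n → Fin 2) → ℂ :=
  fun v => if (Finset.univ.filter fun i => v i = 1).card = w
    then ((Real.sqrt (n.choose w) : ℂ))⁻¹ else 0

/-! ### Subsets as basis labels -/

/-- Computational basis labels as subsets: `S` corresponds to its indicator bit string. -/
def bitsEquiv (n : ℕ) : Finset (Fin n) ≃ (Fin n → Fin 2) where
  toFun S := fun i => if i ∈ S then 1 else 0
  invFun v := Finset.univ.filter fun i => v i = 1
  left_inv S := by ext i; simp
  right_inv v := by
    funext i
    by_cases h : v i = 1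
    · simp [h]
    · simp [h]; omega

lemma bits_wt {n : ℕ} (S : Finset (Fin n)) :
    (Finset.univ.filter fun i => bitsEquiv n S i = 1).card = S.card :=
  congrArg Finset.card ((bitsEquiv n).left_inv S)

/-- The qubits on which `X` acts. -/
def firstQubits (n x : ℕ) : Finset (Fin n) := Finset.univ.filter fun i => (i : ℕ) < x

lemma card_firstQubits {n x : ℕ} (h : x ≤ n) : (firstQubits n x).card = x := by
  rw [firstQubits, Fin.card_filter_val_lt]
  omega

/-- `X^{⊗x} ⊗ I^{⊗(n-x)}` is the permutation matrix of `S ↦ S ∆ {0, …, x-1}`. -/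
lemma pauliOp_bits (n x : ℕ) (S T : Finset (Fin n)) :
    PauliOp n (sigmaLabel n x 0 0) (bitsEquiv n S) (bitsEquiv n T) =
      if T = symmDiff S (firstQubits n x) then 1 else 0 := by
  have key : ∀ i : Fin n, pauli1 (sigmaLabel n x 0 0 i) (bitsEquiv n S i) (bitsEquiv n T i) =
      if (i ∈ T ↔ i ∈ symmDiff S (firstQubits n x)) then (1 : ℂ) else 0 := by
    intro i
    have hb : ∀ U : Finset (Fin n), bitsEquiv n U i = if i ∈ U then 1 else 0 := fun _ => rfl
    rw [hb, hb]
    by_cases h1 : i ∈ S <;> by_cases h2 : i ∈ T <;> by_cases h3 : (i : ℕ) < x <;>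
      simp [firstQubits, sigmaLabel, pauli1, Matrix.one_apply, Finset.mem_symmDiff,
        h1, h2, h3]
  unfold PauliOp
  rw [Finset.prod_congr rfl fun i _ => key i, Fintype.prod_boole]
  by_cases hT : T = symmDiff S (firstQubits n x)
  · rw [if_pos hT, if_pos (Finset.ext_iff.mp hT)]
  · rw [if_neg hT, if_neg (mt Finset.ext hT)]

/-! ### Diagonal matrix elements in the Dicke basis -/

/-- The diagonal matrix element of `X^{⊗2h} ⊗ I` in the Dicke state of weight `w`, rewritten:
`C(2h,h) C(n-2h,w-h) / C(n,w) = C(w,h) C(n-w,h) / C(n,2h)`. -/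
lemma dicke_ratio (n h w : ℕ) (h1 : h ≤ w) (h2 : w + h ≤ n) :
    ((w.choose h * (n - w).choose h : ℝ) / (n.choose (h + h))) =
      ((h + h).choose h * (n - (h + h)).choose (w - h) : ℝ) / (n.choose w) := by
  obtain ⟨p, rfl⟩ := Nat.exists_eq_add_of_le h1
  obtain ⟨q, rfl⟩ := Nat.exists_eq_add_of_le h2
  have e1 : h + p + h + q - (h + p) = h + q := by omega
  have e2 : h + p + h + q - (h + h) = p + q := by omega
  have e3 : h + p - h = p := by omega
  rw [e1, e2, e3]
  have c1 : h + p + h + q = (h + h) + (p + q) := by omega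
  have c2 : h + p + h + q = (h + p) + (h + q) := by omega
  have A1 := Nat.cast_add_choose ℝ (a := h) (b := p)
  have A2 := Nat.cast_add_choose ℝ (a := h) (b := q)
  have A3 := Nat.cast_add_choose ℝ (a := h) (b := h)
  have A4 := Nat.cast_add_choose ℝ (a := p) (b := q)
  have A5 := Nat.cast_add_choose ℝ (a := h + h) (b := p + q)
  have A6 := Nat.cast_add_choose ℝ (a := h + p) (b := h + q)
  rw [← c1] at A5
  rw [← c2] at A6
  rw [A1, A2, A3, A4, A5, A6]
  have := Nat.factorial_ne_zero
  have f : ∀ m : ℕ, (m.factorial : ℝ) ≠ 0 := fun m => by exact_mod_cast this m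
  have := f h; have := f p; have := f q; have := f (h + p); have := f (h + q)
  have := f (h + h); have := f (p + q); have := f (h + p + h + q)
  field_simp

/-- Subsets of size `w` that remain of size `w` after the flip: choosing `h` elements inside the
flipped region and `w - h` outside produces distinct such subsets. -/
lemma card_fixed_ge (n h w : ℕ) (h1 : h ≤ w) (hn : h + h ≤ n) :
    (h + h).choose h * (n - (h + h)).choose (w - h) ≤
      ((Finset.univ : Finset (Finset (Fin n))).filter fun S =>
        S.card = w ∧ (symmDiff S (firstQubits n (h + h))).card = w).card := by
  classical
  set A := firstQubits n (h + h) with hA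
  have cA : A.card = h + h := card_firstQubits hn
  have cAc : Aᶜ.card = n - (h + h) := by rw [Finset.card_compl, cA, Fintype.card_fin]
  have : (h + h).choose h * (n - (h + h)).choose (w - h) =
      (A.powersetCard h ×ˢ Aᶜ.powersetCard (w - h)).card := by
    rw [Finset.card_product, Finset.card_powersetCard, Finset.card_powersetCard, cA, cAc]
  rw [this]
  apply Finset.card_le_card_of_injOn (fun p => p.1 ∪ p.2)
  · rintro ⟨B, C⟩ hp
    simp only [Finset.coe_product, Set.mem_prod, Finset.mem_coe, Finset.mem_powersetCard] at hp
    obtain ⟨⟨hB, cB⟩, hC, cC⟩ := hp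
    have dAC : Disjoint A C := Finset.disjoint_left.mpr fun i hi hi' =>
      (Finset.mem_compl.mp (hC hi')) hi
    have hsd : symmDiff (B ∪ C) A = (A \ B) ∪ C := by
      ext i
      have e1 := @hB i
      have e2 := @hC i
      simp only [Finset.mem_compl] at e2
      simp only [Finset.mem_symmDiff, Finset.mem_union, Finset.mem_sdiff]
      tauto
    simp only [Finset.coe_filter, Finset.mem_univ, true_and, Set.mem_ofPred_eq]
    rw [hsd, Finset.card_union_of_disjoint (dAC.mono_left hB),
      Finset.card_union_of_disjoint (dAC.mono_left Finset.sdiff_subset),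
      Finset.card_sdiff_of_subset hB]
    omega
  · rintro ⟨B, C⟩ hp ⟨B', C'⟩ hp' heq
    simp only [Finset.coe_product, Set.mem_prod, Finset.mem_coe, Finset.mem_powersetCard] at hp hp'
    obtain ⟨⟨hB, -⟩, hC, -⟩ := hp
    obtain ⟨⟨hB', -⟩, hC', -⟩ := hp'
    simp only [Finset.ext_iff, Finset.mem_union] at heq
    have k : ∀ i, (i ∈ B ↔ i ∈ B') ∧ (i ∈ C ↔ i ∈ C') := by
      intro i
      have e1 := @hB i
      have e2 := @hC i
      have e3 := @hB' i
      have e4 := @hC' i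
      have e5 := heq i
      simp only [Finset.mem_compl] at e2 e4
      tauto
    exact Prod.ext (Finset.ext fun i => (k i).1) (Finset.ext fun i => (k i).2)

/-! ### Nonnegative orthonormal families -/

/-- Nonnegative orthonormal vectors have disjoint supports, so each column has at most one nonzero
entry, which is at most `1`. -/
lemma sum_sq_le_one {M : ℕ} (s : Finset ℕ) (b : Fin M → ℕ → ℝ) (hb : ∀ j w, 0 ≤ b j w)
    (ho : ∀ j k, ∑ w ∈ s, b j w * b k w = if j = k then 1 else 0) (w : ℕ) (hw : w ∈ s) :
    ∑ j, b j w ^ 2 ≤ 1 := by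
  have hle : ∀ j k, b j w * b k w ≤ if j = k then 1 else 0 := fun j k => by
    rw [← ho j k]
    exact Finset.single_le_sum (f := fun w => b j w * b k w)
      (fun u _ => mul_nonneg (hb j u) (hb k u)) hw
  by_cases h0 : ∃ j, b j w ≠ 0
  · obtain ⟨j, hj⟩ := h0
    rw [Finset.sum_eq_single_of_mem j (Finset.mem_univ j)]
    · have := hle j j
      rw [if_pos rfl] at this
      nlinarith
    · intro k _ hk
      have h1 := hle k j
      rw [if_neg hk] at h1
      have h2 := le_antisymm h1 (mul_nonneg (hb k w) (hb j w))
      rw [(mul_eq_zero.mp h2).resolve_right hj]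
      norm_num
  · push Not at h0
    simp [h0]

/-! ### Amplitudes of the codewords -/

/-- Coefficients extended by zero to all weights. -/
noncomputable def extendCoeff {n M : ℕ} (a : Fin M → Fin (n + 1) → ℝ) (j : Fin M) (w : ℕ) : ℝ :=
  if h : w < n + 1 then a j ⟨w, h⟩ else 0

lemma extendCoeff_nonneg {n M : ℕ} {a : Fin M → Fin (n + 1) → ℝ} (ha : ∀ j w, 0 ≤ a j w)
    (j : Fin M) (w : ℕ) : 0 ≤ extendCoeff a j w := by
  unfold extendCoeff
  split_ifs
  · exact ha _ _
  · exact le_rfl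

/-- Amplitude of a codeword at a computational basis vector of weight `w`. -/
noncomputable def amp {n M : ℕ} (a : Fin M → Fin (n + 1) → ℝ) (j : Fin M) (w : ℕ) : ℝ :=
  extendCoeff a j w / Real.sqrt (n.choose w)

lemma amp_nonneg {n M : ℕ} {a : Fin M → Fin (n + 1) → ℝ} (ha : ∀ j w, 0 ≤ a j w)
    (j : Fin M) (w : ℕ) : 0 ≤ amp a j w :=
  div_nonneg (extendCoeff_nonneg ha j w) (Real.sqrt_nonneg _)

lemma codeword_bits {n M : ℕ} (a : Fin M → Fin (n + 1) → ℝ) (j : Fin M) (S : Finset (Fin n)) :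
    (∑ w : Fin (n + 1), (a j w : ℂ) * dicke n (w : ℕ) (bitsEquiv n S)) =
      ((amp a j S.card : ℝ) : ℂ) := by
  have hc : S.card < n + 1 := by
    have := Finset.card_le_univ S
    rw [Fintype.card_fin] at this
    omega
  unfold dicke
  rw [bits_wt, Finset.sum_eq_single_of_mem (⟨S.card, hc⟩ : Fin (n + 1)) (Finset.mem_univ _)]
  · simp [amp, extendCoeff, hc, div_eq_mul_inv]
  · intro w _ hw
    rw [if_neg, mul_zero]
    intro h
    exact hw (Fin.ext h.symm)

lemma choose_mul_amp {n M : ℕ} (a : Fin M → Fin (n + 1) → ℝ) (j k : Fin M) {w : ℕ} (hw : w ≤ n) :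
    (n.choose w : ℝ) * (amp a j w * amp a k w) = extendCoeff a j w * extendCoeff a k w := by
  have hpos : (0 : ℝ) < n.choose w := by exact_mod_cast Nat.choose_pos hw
  have hs : Real.sqrt (n.choose w) * Real.sqrt (n.choose w) = n.choose w :=
    Real.mul_self_sqrt hpos.le
  have hne : Real.sqrt (n.choose w) ≠ 0 := (Real.sqrt_pos.mpr hpos).ne'
  unfold amp
  rw [div_mul_div_comm, hs]
  field_simp

lemma sum_amp_mul {n M : ℕ} (a : Fin M → Fin (n + 1) → ℝ) (j k : Fin M) :
    ∑ S : Finset (Fin n), amp a j S.card * amp a k S.card =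
      ∑ w ∈ Finset.range (n + 1), extendCoeff a j w * extendCoeff a k w := by
  have := Finset.sum_powerset_apply_card (fun w => amp a j w * amp a k w)
    (x := (Finset.univ : Finset (Fin n)))
  rw [Finset.powerset_univ, Finset.card_univ, Fintype.card_fin] at this
  rw [this]
  refine Finset.sum_congr rfl fun w hw => ?_
  rw [nsmul_eq_mul, choose_mul_amp a j k (by simpa [Nat.lt_succ_iff] using hw)]

/-- Discarding the nonnegative contributions of pairs of different weights, and those of weights
outside `[h, n - h]`. -/
lemma expectation_ge {n M h : ℕ} {a : Fin M → Fin (n + 1) → ℝ} (ha : ∀ j w, 0 ≤ a j w)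
    (hn : h + h ≤ n) (j : Fin M) {β : ℝ}
    (hβ : ∀ w ∈ Finset.Icc h (n - h),
      β ≤ (w.choose h * (n - w).choose h : ℝ) / (n.choose (h + h))) :
    β * ∑ w ∈ Finset.Icc h (n - h), extendCoeff a j w ^ 2 ≤
      ∑ S : Finset (Fin n),
        amp a j S.card * amp a j (symmDiff S (firstQubits n (h + h))).card := by
  classical
  set A := firstQubits n (h + h)
  let T : ℕ → Finset (Finset (Fin n)) := fun w =>
    Finset.univ.filter fun S => S.card = w ∧ (symmDiff S A).card = w
  have hd : Set.PairwiseDisjoint (↑(Finset.Icc h (n - h))) T := by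
    intro u _ w _ huw
    refine Finset.disjoint_left.mpr fun S hS hS' => huw ?_
    simp only [T, Finset.mem_filter] at hS hS'
    omega
  calc β * ∑ w ∈ Finset.Icc h (n - h), extendCoeff a j w ^ 2
      ≤ ∑ w ∈ Finset.Icc h (n - h), ∑ S ∈ T w,
          amp a j S.card * amp a j (symmDiff S A).card := by
        rw [Finset.mul_sum]
        refine Finset.sum_le_sum fun w hw => ?_
        have hb := hβ w hw
        rw [Finset.mem_Icc] at hw
        rw [dicke_ratio n h w hw.1 (by omega)] at hb
        have hc : ((h + h).choose h * (n - (h + h)).choose (w - h) : ℝ) ≤ (T w).card := by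
          exact_mod_cast card_fixed_ge n h w hw.1 hn
        have hpos : (0 : ℝ) < n.choose w := by exact_mod_cast Nat.choose_pos (by omega)
        have hconst : ∑ S ∈ T w, amp a j S.card * amp a j (symmDiff S A).card =
            (T w).card * (amp a j w * amp a j w) := by
          rw [← nsmul_eq_mul, ← Finset.sum_const]
          refine Finset.sum_congr rfl fun S hS => ?_
          simp only [T, Finset.mem_filter] at hS
          rw [hS.2.1, hS.2.2]
        have h1 : β * n.choose w ≤ (T w).card := ((le_div_iff₀ hpos).mp hb).trans hc
        rw [hconst, pow_two, ← choose_mul_amp a j j (w := w) (by omega), ← mul_assoc]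
        exact mul_le_mul_of_nonneg_right h1 (mul_self_nonneg _)
    _ = ∑ S ∈ (Finset.Icc h (n - h)).biUnion T,
          amp a j S.card * amp a j (symmDiff S A).card := (Finset.sum_biUnion hd).symm
    _ ≤ _ := Finset.sum_le_sum_of_subset_of_nonneg (Finset.subset_univ _)
        fun S _ _ => mul_nonneg (amp_nonneg ha _ _) (amp_nonneg ha _ _)

/-- Let `P = Σ_j |L_j⟩⟨L_j|` be the projector of an `M`-dimensional
permutation-invariant `n`-qubit code whose orthonormal codewords
`|L_j⟩ = Σ_w a_{j,w} |D^n_w⟩` have nonnegative real Dicke coefficients.  For even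
`x ≤ n`, with `β_{n,x} = min_{x/2 ≤ w ≤ n-x/2} C(w,x/2)·C(n-w,x/2)/C(n,x)`, we have
`tr((X^{⊗x} ⊗ I^{⊗(n-x)}) P) ≥ β_{n,x}·(M - x)`. -/
theorem stmt16 (n M x : ℕ) (hx : Even x) (hxn : x ≤ n)
    (a : Fin M → Fin (n + 1) → ℝ) (ha : ∀ j w, 0 ≤ a j w)
    (L : Fin M → (Fin n → Fin 2) → ℂ)
    (hL : ∀ j, L j = fun v => ∑ w : Fin (n + 1), (a j w : ℂ) * dicke n (w : ℕ) v)
    (horth : ∀ j k, (∑ v, star (L j v) * L k v) = if j = k then (1 : ℂ) else 0)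
    (P : Matrix (Fin n → Fin 2) (Fin n → Fin 2) ℂ)
    (hP : P = fun v w => ∑ j, L j v * star (L j w)) :
    ((Finset.Icc (x / 2) (n - x / 2)).inf'
        (Finset.nonempty_Icc.mpr (by omega))
        (fun w => (w.choose (x / 2) * (n - w).choose (x / 2) : ℝ) / (n.choose x))) *
      ((M : ℝ) - (x : ℝ)) ≤
      (Matrix.trace (PauliOp n (sigmaLabel n x 0 0) * P)).re := by
  classical
  obtain ⟨h, rfl⟩ := hx
  have hh : (h + h) / 2 = h := by omega
  simp only [hh]
  set β := (Finset.Icc h (n - h)).inf' (Finset.nonempty_Icc.mpr (by omega))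
    (fun w => (w.choose h * (n - w).choose h : ℝ) / (n.choose (h + h))) with hβdef
  have hβ : ∀ w ∈ Finset.Icc h (n - h),
      β ≤ (w.choose h * (n - w).choose h : ℝ) / (n.choose (h + h)) :=
    fun w hw => Finset.inf'_le _ hw
  have hβ0 : 0 ≤ β := by
    rw [hβdef, Finset.le_inf'_iff]
    intro w _
    positivity
  have hLb : ∀ j S, L j (bitsEquiv n S) = ((amp a j S.card : ℝ) : ℂ) := by
    intro j S
    rw [hL j]
    exact codeword_bits a j S
  have ho : ∀ j k, ∑ w ∈ Finset.range (n + 1), extendCoeff a j w * extendCoeff a k w =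
      if j = k then 1 else 0 := by
    intro j k
    have e := horth j k
    rw [← (bitsEquiv n).sum_comp] at e
    simp only [hLb, Complex.star_def, Complex.conj_ofReal] at e
    rw [← sum_amp_mul]
    apply Complex.ofReal_injective
    push_cast
    rw [e]
    split_ifs <;> simp
  have htr : (Matrix.trace (PauliOp n (sigmaLabel n (h + h) 0 0) * P)).re =
      ∑ j, ∑ S : Finset (Fin n),
        amp a j S.card * amp a j (symmDiff S (firstQubits n (h + h))).card := by
    have : Matrix.trace (PauliOp n (sigmaLabel n (h + h) 0 0) * P) =
        ((∑ j, ∑ S : Finset (Fin n),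
          amp a j S.card * amp a j (symmDiff S (firstQubits n (h + h))).card : ℝ) : ℂ) := by
      rw [Finset.sum_comm, Matrix.trace, ← (bitsEquiv n).sum_comp]
      push_cast
      refine Finset.sum_congr rfl fun S _ => ?_
      rw [Matrix.diag_apply, Matrix.mul_apply, ← (bitsEquiv n).sum_comp]
      simp only [pauliOp_bits, ite_mul, one_mul, zero_mul, Finset.sum_ite_eq',
        Finset.mem_univ, if_true]
      rw [hP]
      refine Finset.sum_congr rfl fun j _ => ?_
      rw [hLb, hLb, Complex.star_def, Complex.conj_ofReal, mul_comm]
    rw [this, Complex.ofReal_re]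
  rw [htr]
  refine le_trans ?_ (Finset.sum_le_sum fun j _ => expectation_ge ha hxn j hβ)
  rw [← Finset.mul_sum, Finset.sum_comm]
  refine mul_le_mul_of_nonneg_left ?_ hβ0
  have hsub : Finset.Icc h (n - h) ⊆ Finset.range (n + 1) := by
    intro w hw
    rw [Finset.mem_Icc] at hw
    rw [Finset.mem_range]
    omega
  have hsplit := Finset.sum_sdiff hsub (f := fun w => ∑ j, extendCoeff a j w ^ 2)
  have htot : ∑ w ∈ Finset.range (n + 1), ∑ j, extendCoeff a j w ^ 2 = (M : ℝ) := by
    rw [Finset.sum_comm]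
    simp only [pow_two, ho, if_true, Finset.sum_const, Finset.card_univ, Fintype.card_fin,
      nsmul_eq_mul, mul_one]
  have hout : ∑ w ∈ Finset.range (n + 1) \ Finset.Icc h (n - h), ∑ j, extendCoeff a j w ^ 2 ≤
      ((h + h : ℕ) : ℝ) := by
    refine (Finset.sum_le_card_nsmul _ _ 1 fun w hw =>
      sum_sq_le_one _ (extendCoeff a) (extendCoeff_nonneg ha) ho w (Finset.mem_sdiff.mp hw).1).trans
        ?_
    rw [nsmul_eq_mul, mul_one, Finset.card_sdiff_of_subset hsub, Finset.card_range, Nat.card_Icc]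
    exact_mod_cast (by omega : n + 1 - (n - h + 1 - h) ≤ h + h)
  linarith
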